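/- (Fairness-aware Bayes-optimal classifier.) Let μ be a probability measure on a measurable space 𝓧 and let η, η̄, η* : 𝓧 → [0, 1] be measurable with π = ∫ η dμ, π̄ = ∫ η̄ dμ, π* = ∫ η* dμ each in (0, 1). Let c, c̄, c* ∈ (0, 1), λ_fair, λ_ratio ∈ ℝ, and define CS(g; η, c) = (1 − c)π + ∫ (c − η) g dμ (analogously for η̄, η*), the Lagrangian risk R_CS(g) = CS(g; η, c) − λ_fair·CS(g; η̄, c̄) − λ_ratio·CS(g; η*, c*), and s*(x) = (η(x) − c) − λ_fair(η̄(x) − c̄) − λ_ratio(η*(x) − c*). Then for every α ∈ [0, 1], the classifier g_opt = H_α ∘ s*, where H_α(z) = 1_{z > 0} + α·1_{z = 0}, minimizes R_CS over all measurable g : 𝓧 → [0, 1]; that is, R_CS(H_α ∘ s*) ≤ R_CS(g) for all measurable g : 𝓧 → [0, 1]. -/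

import Mathlib

open MeasureTheory

/-- Cost-sensitive risk `CS(g; η, c) = (1 − c)π + ∫ (c − η)g dμ`,
with base rate `π` given explicitly as a parameter. -/
noncomputable def CSrisk {X : Type*} [MeasurableSpace X] (μ : Measure X)
    (η : X → ℝ) (c π : ℝ) (g : X → ℝ) : ℝ :=
  (1 - c) * π + ∫ x, (c - η x) * g x ∂μ

/-- Lagrangian risk
`R_CS(g) = CS(g; η, c) − λ_fair·CS(g; η̄, c̄) − λ_ratio·CS(g; η*, c*)`. -/
noncomputable def RCS {X : Type*} [MeasurableSpace X] (μ : Measure X)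
    (η ηbar ηstar : X → ℝ) (c cbar cstar π πbar πstar lamFair lamRatio : ℝ)
    (g : X → ℝ) : ℝ :=
  CSrisk μ η c π g - lamFair * CSrisk μ ηbar cbar πbar g
    - lamRatio * CSrisk μ ηstar cstar πstar g

/-- Fairness-aware Bayes-optimal classifier (Proposition 4.2): for every
`α ∈ [0, 1]`, the classifier `H_α ∘ s*`, with
`H_α(z) = 1_{z > 0} + α·1_{z = 0}` and
`s*(x) = (η(x) − c) − λ_fair(η̄(x) − c̄) − λ_ratio(η*(x) − c*)`,
minimizes the Lagrangian risk `R_CS` over all measurable `g : X → [0, 1]`. -/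
theorem fairness_aware_bayes_optimal
    {X : Type*} [MeasurableSpace X] (μ : Measure X) [IsProbabilityMeasure μ]
    (η ηbar ηstar : X → ℝ)
    (hη : Measurable η) (hη01 : ∀ x, η x ∈ Set.Icc (0 : ℝ) 1)
    (hηbar : Measurable ηbar) (hηbar01 : ∀ x, ηbar x ∈ Set.Icc (0 : ℝ) 1)
    (hηstar : Measurable ηstar) (hηstar01 : ∀ x, ηstar x ∈ Set.Icc (0 : ℝ) 1)
    (c cbar cstar : ℝ) (hc : c ∈ Set.Ioo (0 : ℝ) 1)
    (hcbar : cbar ∈ Set.Ioo (0 : ℝ) 1) (hcstar : cstar ∈ Set.Ioo (0 : ℝ) 1)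
    (lamFair lamRatio : ℝ)
    (π πbar πstar : ℝ)
    (hπ : π = ∫ x, η x ∂μ) (hπbar : πbar = ∫ x, ηbar x ∂μ)
    (hπstar : πstar = ∫ x, ηstar x ∂μ)
    (hπ01 : π ∈ Set.Ioo (0 : ℝ) 1) (hπbar01 : πbar ∈ Set.Ioo (0 : ℝ) 1)
    (hπstar01 : πstar ∈ Set.Ioo (0 : ℝ) 1)
    (sstar : X → ℝ)
    (hs : ∀ x, sstar x =
      (η x - c) - lamFair * (ηbar x - cbar) - lamRatio * (ηstar x - cstar))
    (α : ℝ) (hα : α ∈ Set.Icc (0 : ℝ) 1)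
    (H : ℝ → ℝ)
    (hH : ∀ z, H z = (if 0 < z then (1 : ℝ) else 0) +
      α * (if z = 0 then (1 : ℝ) else 0)) :
    ∀ g : X → ℝ, Measurable g → (∀ x, g x ∈ Set.Icc (0 : ℝ) 1) →
      RCS μ η ηbar ηstar c cbar cstar π πbar πstar lamFair lamRatio
          (fun x => H (sstar x))
        ≤ RCS μ η ηbar ηstar c cbar cstar π πbar πstar lamFair lamRatio g := by
  intro g hg hg01
  have hsm : Measurable sstar := by
    have : sstar = fun x =>
      (η x - c) - lamFair * (ηbar x - cbar) - lamRatio * (ηstar x - cstar) := funext hs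
    rw [this]
    fun_prop
  have hHm : Measurable H := by
    have : H = fun z => (if 0 < z then (1 : ℝ) else 0) +
      α * (if z = 0 then (1 : ℝ) else 0) := funext hH
    rw [this]
    refine Measurable.add ?_ (Measurable.const_mul ?_ _)
    · exact Measurable.ite measurableSet_Ioi measurable_const measurable_const
    · exact Measurable.ite (measurableSet_singleton 0) measurable_const measurable_const
  have hH01 : ∀ z, H z ∈ Set.Icc (0 : ℝ) 1 := by
    intro z
    rw [hH]
    obtain ⟨h0, h1⟩ := hα
    rcases lt_trichotomy z 0 with h | h | h
    · simp [h.ne, h.le.not_gt]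
    · simp [h, h0, h1]
    · simp [h, h.ne']
  have int : ∀ (e : X → ℝ) (d : ℝ) (f : X → ℝ), Measurable e → (∀ x, e x ∈ Set.Icc (0 : ℝ) 1) →
      d ∈ Set.Ioo (0 : ℝ) 1 → Measurable f → (∀ x, f x ∈ Set.Icc (0 : ℝ) 1) →
      Integrable (fun x => (d - e x) * f x) μ := by
    intro e d f he he1 hd hf hf1
    refine Integrable.of_bound (C := 1) (by fun_prop) (Filter.Eventually.of_forall fun x => ?_)
    obtain ⟨a1, a2⟩ := he1 x
    obtain ⟨b1, b2⟩ := hf1 x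
    obtain ⟨c1, c2⟩ := hd
    rw [Real.norm_eq_abs, abs_mul]
    have h1 : |d - e x| ≤ 1 := abs_le.2 ⟨by linarith, by linarith⟩
    have h2 : |f x| ≤ 1 := abs_le.2 ⟨by linarith, by linarith⟩
    exact mul_le_one₀ h1 (abs_nonneg _) h2
  have key : ∀ f : X → ℝ, Measurable f → (∀ x, f x ∈ Set.Icc (0 : ℝ) 1) →
      Integrable (fun x => - sstar x * f x) μ ∧
      RCS μ η ηbar ηstar c cbar cstar π πbar πstar lamFair lamRatio f =
        ((1 - c) * π - lamFair * ((1 - cbar) * πbar) - lamRatio * ((1 - cstar) * πstar))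
          + ∫ x, - sstar x * f x ∂μ := by
    intro f hf hf1
    have i1 := int η c f hη hη01 hc hf hf1
    have i2 := (int ηbar cbar f hηbar hηbar01 hcbar hf hf1).const_mul lamFair
    have i3 := (int ηstar cstar f hηstar hηstar01 hcstar hf hf1).const_mul lamRatio
    have e : (fun x => - sstar x * f x) = fun x => (c - η x) * f x
        - lamFair * ((cbar - ηbar x) * f x) - lamRatio * ((cstar - ηstar x) * f x) := by
      funext x
      rw [hs]
      ring
    have i12 : Integrable (fun x => (c - η x) * f x
        - lamFair * ((cbar - ηbar x) * f x)) μ := i1.sub i2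
    rw [e]
    refine ⟨(i1.sub i2).sub i3, ?_⟩
    rw [integral_sub i12 i3, integral_sub i1 i2, integral_const_mul, integral_const_mul]
    unfold RCS CSrisk
    ring
  obtain ⟨j1, k1⟩ := key (fun x => H (sstar x)) (hHm.comp hsm) (fun x => hH01 _)
  obtain ⟨j2, k2⟩ := key g hg hg01
  rw [k1, k2]
  refine add_le_add le_rfl (integral_mono j1 j2 fun x => ?_)
  obtain ⟨b1, b2⟩ := hg01 x
  simp only [hH]
  rcases lt_trichotomy (sstar x) 0 with h | h | h
  · simp only [h.ne, h.le.not_gt, if_false]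
    nlinarith
  · simp [h]
  · simp only [h, h.ne', if_true, if_false]
    nlinarith
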